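/- Let M = ℂ³ be the commutative C*-algebra of functions Fin 3 → ℂ with pointwise operations and supremum norm, and let φ : M → M be given by φ(y)₀ = (y₀ + y₁ + y₂)/3, φ(y)₁ = y₂, φ(y)₂ = y₁. Then the tail operator system is M_∞ = {y ∈ ℂ³ : y₀ = (y₁ + y₂)/2}; this set is not closed under the pointwise product of ℂ³; and the multiplicative core of φ is C_φ = ℂ·(1,1,1), the scalar multiples of the unit. -/

import Mathlib

/-!
The functional `d(y) = y₀ - (y₁ + y₂)/2` satisfies `d ∘ φ = d / 3`, so a vector with preimages
of bounded norm under every `φⁿ` has `|d(y)| ≤ 2C / 3ⁿ` for all `n`, hence `d(y) = 0`.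
On the plane `d = 0` the map `φ` is an involution, so there `y` is `φⁿ(y)` or `φⁿ(φ y)` according
to the parity of `n`, and `y` lies in the tail system.

The vector `(0, 1, -1)` lies in that plane while its square `(0, 1, 1)` does not.

For the core, the coordinate `0` of the equation defining the definite set is the equality case of
`|(y₀ + y₁ + y₂)/3|² ≤ (|y₀|² + |y₁|² + |y₂|²)/3`, which forces `y₀ = y₁ = y₂`. The definite set is
therefore contained in the constants, and constants are fixed by `φ`.
-/

/-- The tail operator system `M_∞` of `φ`. -/
def tailSystem {M : Type*} [NormedAddCommGroup M] [Module ℂ M] (φ : M →ₗ[ℂ] M) : Set M :=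
  {y | ∃ C > (0 : ℝ), ∀ n : ℕ, 1 ≤ n → ∃ x : M, ‖x‖ ≤ C ∧ (φ ^ n) x = y}

/-- The Jordan product `x ∘ y = (x·y + y·x)/2`. -/
noncomputable def jordan {M : Type*} [Ring M] [Algebra ℂ M] (x y : M) : M :=
  (2⁻¹ : ℂ) • (x * y + y * x)

/-- The definite set `M_φ = {x : φ(x* ∘ x) = φ(x)* ∘ φ(x)}` of `φ`. -/
noncomputable def definiteSet {M : Type*} [Ring M] [StarRing M] [Algebra ℂ M]
    (φ : M →ₗ[ℂ] M) : Set M :=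
  {x | φ (jordan (star x) x) = jordan (star (φ x)) (φ x)}

/-- `B_φ = {x : φ^n(x) ∈ M_φ for all n ≥ 0}`. -/
noncomputable def Bset {M : Type*} [Ring M] [StarRing M] [Algebra ℂ M]
    (φ : M →ₗ[ℂ] M) : Set M :=
  {x | ∀ n : ℕ, (φ ^ n) x ∈ definiteSet φ}

/-- The multiplicative core `C_φ = ⋂_{n ≥ 1} φ^n(B_φ)`. -/
noncomputable def multCore {M : Type*} [Ring M] [StarRing M] [Algebra ℂ M]
    (φ : M →ₗ[ℂ] M) : Set M :=
  ⋂ (n : ℕ) (_ : 1 ≤ n), (φ ^ n) '' (Bset φ)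

/-- Equality in `|(a + b + c)/3|² ≤ (|a|² + |b|² + |c|²)/3`: the difference of the two sides is
`(|a - b|² + |b - c|² + |a - c|²)/9`. -/
lemma eq_of_mean_normSq_eq (a b c : ℂ)
    (h : (star a * a + star b * b + star c * c) / 3
      = star ((a + b + c) / 3) * ((a + b + c) / 3)) : a = b ∧ a = c := by
  have hs : star ((a + b + c) / 3) = (star a + star b + star c) / 3 := by simp
  rw [hs] at h
  have h2 : star (a - b) * (a - b) + star (b - c) * (b - c) + star (a - c) * (a - c) = 0 := by
    simp only [star_sub]
    linear_combination 9 * h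
  have h3 : Complex.normSq (a - b) + Complex.normSq (b - c) + Complex.normSq (a - c) = 0 := by
    have e : ∀ z : ℂ, star z * z = (Complex.normSq z : ℂ) := fun z =>
      (Complex.normSq_eq_conj_mul_self).symm
    rw [e, e, e] at h2
    exact_mod_cast h2
  have p1 := Complex.normSq_nonneg (a - b)
  have p2 := Complex.normSq_nonneg (b - c)
  have p3 := Complex.normSq_nonneg (a - c)
  constructor
  · exact sub_eq_zero.1 (Complex.normSq_eq_zero.1 (by linarith))
  · exact sub_eq_zero.1 (Complex.normSq_eq_zero.1 (by linarith))

lemma jordan_star_self_apply (x : Fin 3 → ℂ) (i : Fin 3) :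
    jordan (star x) x i = star (x i) * x i := by
  simp only [jordan, Pi.smul_apply, Pi.add_apply, Pi.mul_apply, Pi.star_apply, smul_eq_mul]
  ring

lemma defect_pow {φ : (Fin 3 → ℂ) →ₗ[ℂ] (Fin 3 → ℂ)}
    (hφ : ∀ y : Fin 3 → ℂ, φ y 0 = (y 0 + y 1 + y 2) / 3 ∧ φ y 1 = y 2 ∧ φ y 2 = y 1)
    (n : ℕ) (x : Fin 3 → ℂ) :
    x 0 - (x 1 + x 2) / 2
      = 3 ^ n * ((φ ^ n) x 0 - ((φ ^ n) x 1 + (φ ^ n) x 2) / 2) := by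
  induction n with
  | zero => simp
  | succ n ih =>
    rw [ih, pow_succ' φ, Module.End.mul_apply]
    obtain ⟨h0, h1, h2⟩ := hφ ((φ ^ n) x)
    rw [h0, h1, h2]
    ring

lemma map_map_of_defect_eq_zero {φ : (Fin 3 → ℂ) →ₗ[ℂ] (Fin 3 → ℂ)}
    (hφ : ∀ y : Fin 3 → ℂ, φ y 0 = (y 0 + y 1 + y 2) / 3 ∧ φ y 1 = y 2 ∧ φ y 2 = y 1)
    {y : Fin 3 → ℂ} (hy : y 0 = (y 1 + y 2) / 2) :
    φ (φ y) = y := by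
  obtain ⟨h0, h1, h2⟩ := hφ y
  obtain ⟨k0, k1, k2⟩ := hφ (φ y)
  ext i
  fin_cases i
  · change φ (φ y) 0 = y 0
    rw [k0, h0, h1, h2, hy]; ring
  · exact k1.trans h2
  · exact k2.trans h1

lemma tailSystem_eq {φ : (Fin 3 → ℂ) →ₗ[ℂ] (Fin 3 → ℂ)}
    (hφ : ∀ y : Fin 3 → ℂ, φ y 0 = (y 0 + y 1 + y 2) / 3 ∧ φ y 1 = y 2 ∧ φ y 2 = y 1) :
    tailSystem φ = {y : Fin 3 → ℂ | y 0 = (y 1 + y 2) / 2} := by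
  ext y
  constructor
  · rintro ⟨C, hC, h⟩
    by_contra hne
    have hd : 0 < ‖y 0 - (y 1 + y 2) / 2‖ := norm_pos_iff.2 (sub_ne_zero.2 hne)
    obtain ⟨n, hn⟩ := pow_unbounded_of_one_lt (2 * C / ‖y 0 - (y 1 + y 2) / 2‖)
      (by norm_num : (1 : ℝ) < 3)
    have hn' : 2 * C / ‖y 0 - (y 1 + y 2) / 2‖ < 3 ^ (n + 1) :=
      hn.trans_le (pow_le_pow_right₀ (by norm_num) (Nat.le_succ n))
    rw [div_lt_iff₀ hd] at hn'
    obtain ⟨x, hx, rfl⟩ := h (n + 1) (by omega)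
    have e := congrArg norm (defect_pow hφ (n + 1) x)
    rw [norm_mul, norm_pow, Complex.norm_ofNat] at e
    have b : ∀ i, ‖x i‖ ≤ C := fun i => (norm_le_pi_norm x i).trans hx
    have t1 := norm_sub_le (x 0) ((x 1 + x 2) / 2)
    have t2 := norm_add_le (x 1) (x 2)
    rw [norm_div, Complex.norm_ofNat] at t1
    linarith [b 0, b 1, b 2]
  · intro hy
    have hinv := map_map_of_defect_eq_zero hφ hy
    have heven : ∀ k : ℕ, (φ ^ (2 * k)) y = y := by
      intro k
      induction k with
      | zero => simp
      | succ k ih =>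
        rw [Nat.mul_succ, pow_add, Module.End.mul_apply, pow_two, Module.End.mul_apply, hinv, ih]
    refine ⟨‖y‖ + ‖φ y‖ + 1, by positivity, fun n _ => ?_⟩
    obtain ⟨k, rfl | rfl⟩ := Nat.even_or_odd' n
    · exact ⟨y, by linarith [norm_nonneg (φ y)], heven k⟩
    · refine ⟨φ y, by linarith [norm_nonneg y], ?_⟩
      rw [pow_succ, Module.End.mul_apply, hinv, heven]

lemma map_const {φ : (Fin 3 → ℂ) →ₗ[ℂ] (Fin 3 → ℂ)}
    (hφ : ∀ y : Fin 3 → ℂ, φ y 0 = (y 0 + y 1 + y 2) / 3 ∧ φ y 1 = y 2 ∧ φ y 2 = y 1)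
    (c : ℂ) : φ (fun _ => c) = fun _ => c := by
  obtain ⟨h0, h1, h2⟩ := hφ fun _ => c
  ext i
  fin_cases i
  · exact h0.trans (by ring)
  · exact h1
  · exact h2

lemma exists_const_of_mem_definiteSet {φ : (Fin 3 → ℂ) →ₗ[ℂ] (Fin 3 → ℂ)}
    (hφ : ∀ y : Fin 3 → ℂ, φ y 0 = (y 0 + y 1 + y 2) / 3 ∧ φ y 1 = y 2 ∧ φ y 2 = y 1)
    {x : Fin 3 → ℂ} (hx : x ∈ definiteSet φ) :
    ∃ c : ℂ, x = fun _ => c := by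
  have h := congrFun hx 0
  rw [jordan_star_self_apply, (hφ _).1, (hφ _).1] at h
  simp only [jordan_star_self_apply] at h
  obtain ⟨h1, h2⟩ := eq_of_mean_normSq_eq _ _ _ h
  refine ⟨x 0, ?_⟩
  ext i
  fin_cases i
  · rfl
  · exact h1.symm
  · exact h2.symm

lemma pow_map_const {φ : (Fin 3 → ℂ) →ₗ[ℂ] (Fin 3 → ℂ)}
    (hφ : ∀ y : Fin 3 → ℂ, φ y 0 = (y 0 + y 1 + y 2) / 3 ∧ φ y 1 = y 2 ∧ φ y 2 = y 1)
    (n : ℕ) (c : ℂ) : (φ ^ n) (fun _ => c) = fun _ => c := by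
  induction n with
  | zero => simp
  | succ n ih => rw [pow_succ, Module.End.mul_apply, map_const hφ, ih]

lemma const_mem_Bset {φ : (Fin 3 → ℂ) →ₗ[ℂ] (Fin 3 → ℂ)}
    (hφ : ∀ y : Fin 3 → ℂ, φ y 0 = (y 0 + y 1 + y 2) / 3 ∧ φ y 1 = y 2 ∧ φ y 2 = y 1)
    (c : ℂ) : (fun _ => c) ∈ Bset φ := by
  intro n
  rw [pow_map_const hφ]
  have hj : jordan (star fun _ : Fin 3 => c) (fun _ => c) = fun _ => star c * c := by
    ext i
    exact jordan_star_self_apply _ i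
  change φ (jordan (star fun _ => c) fun _ => c) = jordan (star (φ fun _ => c)) (φ fun _ => c)
  rw [map_const hφ, hj, map_const hφ]

lemma multCore_eq {φ : (Fin 3 → ℂ) →ₗ[ℂ] (Fin 3 → ℂ)}
    (hφ : ∀ y : Fin 3 → ℂ, φ y 0 = (y 0 + y 1 + y 2) / 3 ∧ φ y 1 = y 2 ∧ φ y 2 = y 1) :
    multCore φ = {y : Fin 3 → ℂ | ∃ c : ℂ, y = fun _ => c} := by
  ext y
  simp only [multCore, Set.mem_iInter, Set.mem_ofPred_eq]
  constructor
  · intro h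
    obtain ⟨x, hx, rfl⟩ := h 1 le_rfl
    obtain ⟨c, rfl⟩ := exists_const_of_mem_definiteSet hφ (by simpa using hx 0)
    exact ⟨c, pow_map_const hφ 1 c⟩
  · rintro ⟨c, rfl⟩ n _
    exact ⟨_, const_mem_Bset hφ c, pow_map_const hφ n c⟩

/-- for the stochastic map `φ(y) = ((y₀+y₁+y₂)/3, y₂, y₁)` on `ℂ³`, the tail
operator system is `{y : y₀ = (y₁+y₂)/2}`, it is not closed under the pointwise product, and
the multiplicative core is the scalar multiples of the unit. -/
theorem stochastic_map_tailSystem_and_multCore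
    (φ : (Fin 3 → ℂ) →ₗ[ℂ] (Fin 3 → ℂ))
    (hφ : ∀ y : Fin 3 → ℂ,
      φ y 0 = (y 0 + y 1 + y 2) / 3 ∧ φ y 1 = y 2 ∧ φ y 2 = y 1) :
    tailSystem φ = {y : Fin 3 → ℂ | y 0 = (y 1 + y 2) / 2} ∧
      ¬ (∀ x ∈ tailSystem φ, ∀ y ∈ tailSystem φ, x * y ∈ tailSystem φ) ∧
      multCore φ = {y : Fin 3 → ℂ | ∃ c : ℂ, y = fun _ => c} := by
  refine ⟨tailSystem_eq hφ, fun h => ?_, multCore_eq hφ⟩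
  rw [tailSystem_eq hφ] at h
  have hv : (![0, 1, -1] : Fin 3 → ℂ) ∈ {y : Fin 3 → ℂ | y 0 = (y 1 + y 2) / 2} := by simp
  have := h _ hv _ hv
  simp at this
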